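/- Let C ⊆ V be a symmetric cone in a finite-dimensional real inner product space V, and let k ≥ 1. Let C_{ℓ1^k} = {(t,x) ∈ R ⊕ R^k : ‖x‖₁ ≤ t} ⊆ R^{k+1}, and let I_{√k} : R^{k+1} → R^{k+1} be the linear map (t,x) ↦ (√k · t, x). Then (id_V ⊗ I_{√k})(C ⊗max C_{ℓ1^k}) ⊆ C ⊗min C_{ℓ1^k}. -/

import Mathlib

open scoped TensorProduct RealInnerProductSpace
open Set

noncomputable section

/-- The dual cone of a set `C`, inside the algebraic dual space. -/
def dualConeSet {V : Type*} [AddCommGroup V] [Module ℝ V] (C : Set V) :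
    Set (Module.Dual ℝ V) := {φ | ∀ x ∈ C, 0 ≤ φ x}

/-- A proper cone: a closed convex cone which is generating (`C - C = V`) and
pointed (`C ∩ (-C) = {0}`). -/
def IsProperCone {V : Type*} [NormedAddCommGroup V] [NormedSpace ℝ V] (C : Set V) : Prop :=
  IsClosed C ∧ Convex ℝ C ∧ (∀ ⦃c : ℝ⦄, 0 < c → ∀ ⦃x⦄, x ∈ C → c • x ∈ C) ∧
    (∀ v : V, ∃ x ∈ C, ∃ y ∈ C, v = x - y) ∧ C ∩ (-C) = {0}

/-- The minimal tensor product of two cones. -/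
def minTensor {V W : Type*} [AddCommGroup V] [Module ℝ V] [AddCommGroup W] [Module ℝ W]
    (C : Set V) (D : Set W) : Set (V ⊗[ℝ] W) :=
  convexHull ℝ {z | ∃ x ∈ C, ∃ y ∈ D, z = x ⊗ₜ[ℝ] y}

/-- The maximal tensor product of two cones: the dual of the minimal tensor product of the
dual cones, under the canonical identification of `(V ⊗ W)*` with `V* ⊗ W*`. -/
def maxTensor {V W : Type*} [AddCommGroup V] [Module ℝ V] [AddCommGroup W] [Module ℝ W]
    (C : Set V) (D : Set W) : Set (V ⊗[ℝ] W) :=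
  {z | ∀ φ ∈ dualConeSet C, ∀ ψ ∈ dualConeSet D,
      0 ≤ TensorProduct.dualDistrib ℝ V W (φ ⊗ₜ[ℝ] ψ) z}

/-- A symmetric cone: a proper cone which is self-dual with respect to the inner product and
whose automorphism group acts transitively on its interior. -/
def IsSymmetricCone {V : Type*} [NormedAddCommGroup V] [InnerProductSpace ℝ V]
    (C : Set V) : Prop :=
  IsProperCone C ∧ (C = {y | ∀ x ∈ C, 0 ≤ ⟪x, y⟫}) ∧
    ∀ x ∈ interior C, ∀ y ∈ interior C, ∃ A : V ≃ₗ[ℝ] V, (⇑A) '' C = C ∧ A x = y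

/-- The cone over the unit ball of `ℓ₁ᵏ`: `{(t,x) : ‖x‖₁ ≤ t} ⊆ ℝ ⊕ ℝᵏ`. -/
def l1Cone (k : ℕ) : Set (ℝ × (Fin k → ℝ)) := {p | ∑ i, |p.2 i| ≤ p.1}

/-- The isotropic map `I_{√k} : (t,x) ↦ (√k · t, x)`. -/
def isoSqrt (k : ℕ) : (ℝ × (Fin k → ℝ)) →ₗ[ℝ] (ℝ × (Fin k → ℝ)) :=
  LinearMap.prodMap ((Real.sqrt k) • LinearMap.id) LinearMap.id

/-!
In coordinates, an element of `C ⊗max C_{ℓ₁}` is a pair `(z₀, z)` with `z₀ + ∑ εᵢ zᵢ ∈ C` for all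
signs `ε`, and the dual of `C ⊗min C_{ℓ₁}` consists of the pairs `(w₀, w)` with `w₀ ± wᵢ ∈ C`. By
separation it suffices to show `√k ⟪z₀, w₀⟫ + ∑ ⟪zᵢ, wᵢ⟫ ≥ 0` for two such pairs.

If `z₀ = w₀`, self-duality gives `‖wᵢ‖ ≤ ‖z₀‖` and `‖∑ εᵢ zᵢ‖ ≤ ‖z₀‖`; choosing the signs well
yields `∑ ‖zᵢ‖² ≤ ‖z₀‖²`, and the inequality follows from Cauchy–Schwarz. For `z₀, w₀` in the
interior one reduces to this case by an automorphism `A` of `C` with `A z₀ = (A⁻¹)† w₀`, applied to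
`z` while `(A⁻¹)†` is applied to `w`.

Such an `A` minimises `⟪e, A z₀⟫ + ⟪A⁻¹ e, w₀⟫`, where `e` is the point of least norm among those
whose closed unit ball lies in `C`: then `X† e = X e` for every `X` in the Lie algebra of the
automorphism group, and these vectors `X e` exhaust the space because the group is transitive, so
the criticality equations `⟪X e, A z₀ - (A⁻¹)† w₀⟫ = 0` force equality.
-/

open Filter Topology
open ContinuousLinearMap (adjoint)

section Cone

variable {V : Type*} [AddCommGroup V] [Module ℝ V] [TopologicalSpace V] {K : ProperCone ℝ V}

lemma add_mem_interior_cone [ContinuousAdd V] {x y : V} (hx : x ∈ interior (K : Set V))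
    (hy : y ∈ K) : x + y ∈ interior (K : Set V) := by
  refine interior_maximal ?_ ((isOpenMap_add_right y) _ isOpen_interior) (mem_image_of_mem _ hx)
  rintro _ ⟨z, hz, rfl⟩
  exact K.add_mem (interior_subset hz) hy

lemma smul_mem_interior_cone [ContinuousConstSMul ℝ V] {x : V} (hx : x ∈ interior (K : Set V))
    {c : ℝ} (hc : 0 < c) : c • x ∈ interior (K : Set V) := by
  refine interior_maximal ?_ ((isOpenMap_smul₀ hc.ne') _ isOpen_interior) (mem_image_of_mem _ hx)
  rintro _ ⟨z, hz, rfl⟩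
  exact K.smul_mem (interior_subset hz) hc.le

lemma subset_closure_interior_cone [IsTopologicalAddGroup V] [ContinuousSMul ℝ V]
    (hne : (interior (K : Set V)).Nonempty) :
    (K : Set V) ⊆ closure (interior K) := by
  rw [K.convex.closure_interior_eq_closure_of_nonempty_interior hne]
  exact subset_closure

end Cone

lemma exists_closedBall_subset_of_mem_interior {X : Type*} [PseudoMetricSpace X] {s : Set X} {x : X}
    (hx : x ∈ interior s) : ∃ r > 0, Metric.closedBall x r ⊆ s :=
  Metric.nhds_basis_closedBall.mem_iff.1 (mem_interior_iff_mem_nhds.1 hx)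

section SelfDual

variable {V : Type*} [NormedAddCommGroup V] [InnerProductSpace ℝ V] [CompleteSpace V]

/-- A closed convex cone `K` is self-dual if it coincides with its dual cone, taken inside the
ambient space by means of the inner product. -/
def IsSelfDual (K : ProperCone ℝ V) : Prop := ProperCone.innerDual (K : Set V) = K

namespace IsSelfDual

variable {K : ProperCone ℝ V}

lemma mem_iff (hK : IsSelfDual K) {y : V} : y ∈ K ↔ ∀ x ∈ K, 0 ≤ ⟪x, y⟫ := by
  conv_lhs => rw [← hK]
  exact ProperCone.mem_innerDual

lemma inner_nonneg (hK : IsSelfDual K) {x y : V} (hx : x ∈ K) (hy : y ∈ K) : 0 ≤ ⟪x, y⟫ :=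
  hK.mem_iff.1 hy x hx

lemma norm_le_norm_of_add_mem_of_sub_mem (hK : IsSelfDual K) {a b : V} (hadd : a + b ∈ K)
    (hsub : a - b ∈ K) : ‖b‖ ≤ ‖a‖ := by
  have h := hK.inner_nonneg hadd hsub
  rw [inner_add_left, inner_sub_right, inner_sub_right, real_inner_comm a b,
    real_inner_self_eq_norm_sq, real_inner_self_eq_norm_sq] at h
  exact le_of_sq_le_sq (by linarith) (norm_nonneg a)

lemma norm_le_norm_of_sub_mem (hK : IsSelfDual K) {x y : V} (hx : x ∈ K) (hyx : y - x ∈ K) :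
    ‖x‖ ≤ ‖y‖ := by
  have h : ‖(2 : ℝ)⁻¹ • y - x‖ ≤ ‖(2 : ℝ)⁻¹ • y‖ :=
    hK.norm_le_norm_of_add_mem_of_sub_mem (by convert hyx using 1; module)
      (by convert hx using 1; module)
  calc ‖x‖ = ‖(2 : ℝ)⁻¹ • y - ((2 : ℝ)⁻¹ • y - x)‖ := by rw [sub_sub_cancel]
    _ ≤ ‖(2 : ℝ)⁻¹ • y‖ + ‖(2 : ℝ)⁻¹ • y‖ := (norm_sub_le _ _).trans (by gcongr)
    _ = ‖y‖ := by rw [norm_smul, Real.norm_of_nonneg (by norm_num)]; ring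

lemma exists_eq_sub_inner_eq_zero (hK : IsSelfDual K) (z : V) :
    ∃ p ∈ K, ∃ m ∈ K, z = p - m ∧ ⟪p, m⟫ = 0 := by
  obtain ⟨p, hp, hmin⟩ :=
    exists_norm_eq_iInf_of_complete_convex K.nonempty K.isClosed.isComplete K.convex z
  have hproj : ∀ w ∈ K, ⟪z - p, w - p⟫ ≤ 0 :=
    (norm_eq_iInf_iff_real_inner_le_zero K.convex hp).1 hmin
  have horth : ⟪p - z, p⟫ = 0 := by
    have h₀ := hproj 0 K.zero_mem
    have h₂ := hproj ((2 : ℝ) • p) (K.smul_mem hp zero_le_two)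
    rw [two_smul, add_sub_cancel_right] at h₂
    rw [zero_sub, inner_neg_right] at h₀
    rw [← neg_sub z p, inner_neg_left]
    linarith
  refine ⟨p, hp, p - z, hK.mem_iff.2 fun w hw => ?_, (sub_sub_cancel p z).symm, ?_⟩
  · have h := hproj w hw
    rw [← neg_sub p z, inner_neg_left, inner_sub_right, horth] at h
    rw [real_inner_comm]
    linarith
  · rw [real_inner_comm, horth]

lemma adjoint_mapsTo (hK : IsSelfDual K) {A : V →L[ℝ] V} (hA : MapsTo A K K) :
    MapsTo (adjoint A) K K := fun y hy => hK.mem_iff.2 fun x hx => by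
  rw [ContinuousLinearMap.adjoint_inner_right]
  exact hK.inner_nonneg (hA hx) hy

lemma closedBall_subset_iff (hK : IsSelfDual K) {x : V} {r : ℝ} (hr : 0 ≤ r) :
    Metric.closedBall x r ⊆ K ↔ ∀ y ∈ K, r * ‖y‖ ≤ ⟪x, y⟫ := by
  refine ⟨fun hball y hy => ?_, fun hxr z hz => hK.mem_iff.2 fun y hy => ?_⟩
  · rcases eq_or_ne y 0 with rfl | hy₀
    · simp
    have hmem : x - (r / ‖y‖) • y ∈ K := hball <| by
      rw [Metric.mem_closedBall, dist_eq_norm, sub_sub_cancel_left, norm_neg, norm_smul,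
        Real.norm_of_nonneg (by positivity), div_mul_cancel₀ _ (norm_ne_zero_iff.2 hy₀)]
    have h := hK.inner_nonneg hmem hy
    rw [inner_sub_left, real_inner_smul_left, real_inner_self_eq_norm_sq] at h
    have : r / ‖y‖ * ‖y‖ ^ 2 = r * ‖y‖ := by field_simp
    linarith
  · have hzx : ‖z - x‖ ≤ r := by rwa [← dist_eq_norm]
    calc 0 ≤ ⟪x, y⟫ - ‖z - x‖ * ‖y‖ := by
          have := mul_le_mul_of_nonneg_right hzx (norm_nonneg y)
          linarith [hxr y hy]
      _ ≤ ⟪x, y⟫ + ⟪z - x, y⟫ := by linarith [neg_le_of_abs_le (abs_real_inner_le_norm (z - x) y)]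
      _ = ⟪y, z⟫ := by rw [← inner_add_left, add_sub_cancel, real_inner_comm]

lemma opNorm_mul_le (hK : IsSelfDual K) {x : V} {r : ℝ} (hr : 0 < r)
    (hball : Metric.closedBall x r ⊆ K) {A : V →L[ℝ] V} (hA : MapsTo A K K) :
    r * ‖A‖ ≤ ‖A x‖ := by
  rw [← le_div_iff₀' hr]
  refine A.opNorm_le_of_unit_norm (by positivity) fun v hv => ?_
  have hrv : ‖r • v‖ ≤ r := by rw [norm_smul, hv, mul_one, Real.norm_of_nonneg hr.le]
  have h : ‖A (r • v)‖ ≤ ‖A x‖ := hK.norm_le_norm_of_add_mem_of_sub_mem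
    (by rw [← map_add]; exact hA (hball (by simpa using hrv)))
    (by rw [← map_sub]; exact hA (hball (by simpa using hrv)))
  rwa [map_smul, norm_smul, Real.norm_of_nonneg hr.le, ← le_div_iff₀' hr] at h

lemma interior_nonempty [FiniteDimensional ℝ V] (hK : IsSelfDual K) :
    (interior (K : Set V)).Nonempty := by
  rw [K.convex.interior_nonempty_iff_affineSpan_eq_top,
    AffineSubspace.affineSpan_eq_top_iff_vectorSpan_eq_top_of_nonempty ℝ V V K.nonempty,
    Submodule.eq_top_iff']
  intro z
  obtain ⟨p, hp, m, hm, rfl, -⟩ := hK.exists_eq_sub_inner_eq_zero z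
  exact vsub_mem_vectorSpan ℝ hp hm

end IsSelfDual

end SelfDual

section BanachAlgebra

variable {𝔸 : Type*} [NormedRing 𝔸]

lemma norm_one_add_pow_sub_one_le (a : 𝔸) (n : ℕ) : ‖(1 + a) ^ n - 1‖ ≤ (1 + ‖a‖) ^ n - 1 := by
  induction n with
  | zero => simp
  | succ n ih =>
    calc ‖(1 + a) ^ (n + 1) - 1‖ = ‖((1 + a) ^ n - 1) + a + a * ((1 + a) ^ n - 1)‖ := by
          rw [pow_succ']; noncomm_ring
      _ ≤ ‖(1 + a) ^ n - 1‖ + ‖a‖ + ‖a‖ * ‖(1 + a) ^ n - 1‖ :=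
          norm_add₃_le.trans (by gcongr; exact norm_mul_le _ _)
      _ ≤ ((1 + ‖a‖) ^ n - 1) + ‖a‖ + ‖a‖ * ((1 + ‖a‖) ^ n - 1) := by gcongr
      _ = (1 + ‖a‖) ^ (n + 1) - 1 := by ring

variable [NormedAlgebra ℝ 𝔸]

lemma tendsto_one_add_pow_of_tendsto_smul_zero {a : ℕ → 𝔸}
    (ha : Tendsto (fun n : ℕ => (n : ℝ) • a n) atTop (𝓝 0)) :
    Tendsto (fun n : ℕ => (1 + a n) ^ n) atTop (𝓝 1) := by
  have hexp : Tendsto (fun n : ℕ => Real.exp ‖(n : ℝ) • a n‖ - 1) atTop (𝓝 0) := by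
    simpa using ((Real.continuous_exp.tendsto 0).comp (by simpa using ha.norm)).sub_const 1
  rw [tendsto_iff_norm_sub_tendsto_zero]
  refine squeeze_zero (fun _ => norm_nonneg _) (fun n => ?_) hexp
  calc ‖(1 + a n) ^ n - 1‖ ≤ (1 + ‖a n‖) ^ n - 1 := norm_one_add_pow_sub_one_le _ _
    _ ≤ Real.exp ‖a n‖ ^ n - 1 := by gcongr; linarith [Real.add_one_le_exp ‖a n‖]
    _ = Real.exp ‖(n : ℝ) • a n‖ - 1 := by
      rw [← Real.exp_nat_mul, norm_smul, Real.norm_natCast]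

variable [CompleteSpace 𝔸]

lemma hasDerivAt_exp_smul_zero (x : 𝔸) :
    HasDerivAt (fun t : ℝ => NormedSpace.exp (t • x)) x 0 := by
  simpa only [zero_smul, NormedSpace.exp_zero, one_mul] using hasDerivAt_exp_smul_const x (0 : ℝ)

lemma tendsto_one_sub_inv_smul_pow_mul_exp (x : 𝔸) :
    Tendsto (fun n : ℕ => (1 - (n : ℝ)⁻¹ • x) ^ n * NormedSpace.exp x) atTop (𝓝 1) := by
  let : NormedAlgebra ℚ 𝔸 := NormedAlgebra.restrictScalars ℚ ℝ 𝔸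
  let a : ℕ → 𝔸 := fun n => (1 - (n : ℝ)⁻¹ • x) * NormedSpace.exp ((n : ℝ)⁻¹ • x) - 1
  have hderiv : HasDerivAt (fun t : ℝ => (1 - t • x) * NormedSpace.exp (t • x)) 0 0 := by
    simpa [NormedSpace.exp_zero] using!
      (((hasDerivAt_id (0 : ℝ)).smul_const x).const_sub 1).mul (hasDerivAt_exp_smul_zero x)
  have ha : Tendsto (fun n : ℕ => (n : ℝ) • a n) atTop (𝓝 0) := by
    have hinv : Tendsto (fun n : ℕ => (n : ℝ)⁻¹) atTop (𝓝[≠] 0) :=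
      tendsto_nhdsWithin_iff.2 ⟨tendsto_inv_atTop_nhds_zero_nat, by
        filter_upwards [eventually_ne_atTop 0] with n hn using by simpa using hn⟩
    refine (hderiv.tendsto_slope.comp hinv).congr fun n => ?_
    simp [a, slope, NormedSpace.exp_zero]
  refine (tendsto_one_add_pow_of_tendsto_smul_zero ha).congr' ?_
  filter_upwards [eventually_ne_atTop 0] with n hn
  have hcomm : Commute (1 - (n : ℝ)⁻¹ • x) (NormedSpace.exp ((n : ℝ)⁻¹ • x)) :=
    ((Commute.one_left _).sub_left (Commute.refl _)).exp_right
  have hexp : NormedSpace.exp ((n : ℝ)⁻¹ • x) ^ n = NormedSpace.exp x := by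
    rw [← NormedSpace.exp_nsmul, ← Nat.cast_smul_eq_nsmul ℝ, smul_smul,
      mul_inv_cancel₀ (Nat.cast_ne_zero.2 hn), one_smul]
  rw [add_sub_cancel, hcomm.mul_pow, hexp]

end BanachAlgebra

section LieAlgebra

variable {V : Type*} [NormedAddCommGroup V] [InnerProductSpace ℝ V] {K : ProperCone ℝ V}

/-- The Lie algebra of the automorphism group of a self-dual cone `K`, described infinitesimally:
at a boundary point `x` of `K` the vector `X x` is tangent to every supporting hyperplane `yᗮ`. -/
def coneLieAlgebra (K : ProperCone ℝ V) : Submodule ℝ (V →L[ℝ] V) where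
  carrier := {X | ∀ x ∈ K, ∀ y ∈ K, ⟪x, y⟫ = 0 → ⟪X x, y⟫ = 0}
  add_mem' hX hY x hx y hy hxy := by
    rw [add_apply, inner_add_left, hX x hx y hy hxy, hY x hx y hy hxy, add_zero]
  zero_mem' x _ y _ _ := by rw [zero_apply, inner_zero_left]
  smul_mem' c X hX x hx y hy hxy := by
    rw [smul_apply, real_inner_smul_left, hX x hx y hy hxy, mul_zero]

variable [CompleteSpace V]

lemma adjoint_mem_coneLieAlgebra {X : V →L[ℝ] V} (hX : X ∈ coneLieAlgebra K) :
    adjoint X ∈ coneLieAlgebra K := fun x hx y hy hxy => by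
  rw [ContinuousLinearMap.adjoint_inner_left, real_inner_comm]
  exact hX y hy x hx (by rwa [real_inner_comm])

namespace IsSelfDual

-- The negative part `m` of `z` vanishes: pairing it with `z - t • X z ∈ K` gives
-- `0 ≤ -‖m‖² + t⟪X m, m⟫`.
lemma mem_of_one_sub_smul_apply_mem (hK : IsSelfDual K) {X : V →L[ℝ] V} (hX : X ∈ coneLieAlgebra K)
    {t : ℝ} (ht : 0 ≤ t) (htX : t * ‖X‖ < 1) {z : V} (hz : (1 - t • X) z ∈ K) : z ∈ K := by
  obtain ⟨p, hp, m, hm, rfl, hpm⟩ := hK.exists_eq_sub_inner_eq_zero z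
  have hpair : ⟪(1 - t • X) (p - m), m⟫ = t * ⟪X m, m⟫ - ‖m‖ ^ 2 := by
    simp only [sub_apply, smul_apply, one_apply_eq_self, map_sub, inner_sub_left,
      real_inner_smul_left, hpm, hX p hp m hm hpm, real_inner_self_eq_norm_sq]
    ring
  have hle : t * ⟪X m, m⟫ ≤ t * ‖X‖ * ‖m‖ ^ 2 :=
    calc t * ⟪X m, m⟫ ≤ t * (‖X m‖ * ‖m‖) := by gcongr; exact real_inner_le_norm _ _
      _ ≤ t * (‖X‖ * ‖m‖ * ‖m‖) := by gcongr; exact X.le_opNorm m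
      _ = t * ‖X‖ * ‖m‖ ^ 2 := by ring
  have hm₀ : m = 0 := by
    by_contra hne
    have : 0 < ‖m‖ ^ 2 := by positivity
    nlinarith [hK.inner_nonneg hz hm]
  simpa [hm₀] using hp

lemma mem_of_one_sub_smul_pow_apply_mem (hK : IsSelfDual K) {X : V →L[ℝ] V}
    (hX : X ∈ coneLieAlgebra K) {t : ℝ} (ht : 0 ≤ t) (htX : t * ‖X‖ < 1) (n : ℕ) {z : V}
    (hz : ((1 - t • X) ^ n) z ∈ K) : z ∈ K := by
  induction n with
  | zero => simpa using hz
  | succ n ih =>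
    rw [pow_succ'] at hz
    exact ih (hK.mem_of_one_sub_smul_apply_mem hX ht htX hz)

lemma exp_apply_mem_of_mem_interior (hK : IsSelfDual K) {X : V →L[ℝ] V}
    (hX : X ∈ coneLieAlgebra K) {x : V} (hx : x ∈ interior (K : Set V)) :
    NormedSpace.exp X x ∈ K := by
  have hlim : Tendsto (fun n : ℕ => ((1 - (n : ℝ)⁻¹ • X) ^ n * NormedSpace.exp X) x) atTop (𝓝 x) :=
    ((ContinuousLinearMap.apply ℝ V x).continuous.tendsto 1).comp
      (tendsto_one_sub_inv_smul_pow_mul_exp X)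
  have hsmall : ∀ᶠ n : ℕ in atTop, (n : ℝ)⁻¹ * ‖X‖ < 1 := by
    have := (tendsto_inv_atTop_nhds_zero_nat (𝕜 := ℝ)).mul_const ‖X‖
    rw [zero_mul] at this
    exact this.eventually_lt_const one_pos
  obtain ⟨n, hn, hnX⟩ :=
    ((hlim.eventually (mem_interior_iff_mem_nhds.1 hx)).and hsmall).exists
  exact hK.mem_of_one_sub_smul_pow_apply_mem hX (by positivity) hnX n hn

lemma exp_mapsTo (hK : IsSelfDual K) (hne : (interior (K : Set V)).Nonempty) {X : V →L[ℝ] V}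
    (hX : X ∈ coneLieAlgebra K) : MapsTo (NormedSpace.exp X : V →L[ℝ] V) K K := by
  have hint : MapsTo (NormedSpace.exp X : V →L[ℝ] V) (interior (K : Set V)) K :=
    fun x hx => hK.exp_apply_mem_of_mem_interior hX hx
  have hclos := hint.closure (NormedSpace.exp X).continuous
  rw [K.isClosed.closure_eq] at hclos
  exact hclos.mono_left (subset_closure_interior_cone hne)

end IsSelfDual

end LieAlgebra

section AutomorphismGroup

open scoped Pointwise

variable {V : Type*} [NormedAddCommGroup V]

instance continuousSMul_continuousLinearMap [NormedSpace ℝ V] : ContinuousSMul (V →L[ℝ] V) V :=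
  ⟨by change Continuous fun p : (V →L[ℝ] V) × V => p.1 p.2; fun_prop⟩

/-- The group of linear automorphisms of a cone `K`, realised inside the units of the algebra of
operators: their topology makes both `A` and `A⁻¹` depend continuously on `A`. -/
def coneAut [NormedSpace ℝ V] (K : ProperCone ℝ V) : Subgroup (V →L[ℝ] V)ˣ :=
  MulAction.stabilizer (V →L[ℝ] V)ˣ (K : Set V)

/-- A cone is homogeneous if its automorphism group acts transitively on its interior. -/
def IsHomogeneousCone [NormedSpace ℝ V] (K : ProperCone ℝ V) : Prop :=
  ∀ x ∈ interior (K : Set V), ∀ y ∈ interior (K : Set V), ∃ A ∈ coneAut K, A • x = y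

section NormedSpace

variable [NormedSpace ℝ V] {K : ProperCone ℝ V} {A : (V →L[ℝ] V)ˣ}

lemma mem_coneAut_iff_smul_mem_iff : A ∈ coneAut K ↔ ∀ x, A • x ∈ K ↔ x ∈ K :=
  MulAction.mem_stabilizer_set

lemma mem_coneAut_iff_mapsTo :
    A ∈ coneAut K ↔ MapsTo (A : V →L[ℝ] V) K K ∧ MapsTo (↑A⁻¹ : V →L[ℝ] V) K K := by
  rw [mem_coneAut_iff_smul_mem_iff]
  refine ⟨fun hA => ⟨fun x hx => (hA x).2 hx, fun x hx => (hA _).1 ?_⟩,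
    fun hA x => ⟨fun hx => ?_, fun hx => hA.1 hx⟩⟩
  · change A • A⁻¹ • x ∈ K
    rwa [smul_inv_smul]
  · rw [← inv_smul_smul A x]
    exact hA.2 hx

lemma mapsTo_of_mem_coneAut (hA : A ∈ coneAut K) : MapsTo (A : V →L[ℝ] V) K K :=
  (mem_coneAut_iff_mapsTo.1 hA).1

lemma smul_mem_interior_of_mem_coneAut (hA : A ∈ coneAut K) {x : V}
    (hx : x ∈ interior (K : Set V)) : A • x ∈ interior (K : Set V) := by
  rw [← MulAction.mem_stabilizer_iff.1 hA, interior_smul]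
  exact smul_mem_smul_set hx

lemma closedBall_smul_subset_of_mem_coneAut {A : (V →L[ℝ] V)ˣ} (hA : A ∈ coneAut K)
    (hA_norm : ∀ v : V, ‖A • v‖ = ‖v‖) {x : V} {r : ℝ} (hx : Metric.closedBall x r ⊆ (K : Set V)) :
    Metric.closedBall (A • x) r ⊆ (K : Set V) := by
  intro z hz
  rw [← smul_inv_smul A z]
  refine mapsTo_of_mem_coneAut hA (hx ?_)
  rwa [Metric.mem_closedBall, dist_eq_norm, ← hA_norm, smul_sub, smul_inv_smul, ← dist_eq_norm]

lemma isClosed_coneAut (K : ProperCone ℝ V) : IsClosed (coneAut K : Set (V →L[ℝ] V)ˣ) := by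
  have hset : (coneAut K : Set (V →L[ℝ] V)ˣ) =
      ⋂ x ∈ K, {A | A • x ∈ (K : Set V)} ∩ {A | A⁻¹ • x ∈ (K : Set V)} := by
    ext A
    simp only [SetLike.mem_coe, mem_coneAut_iff_mapsTo, mem_iInter, mem_inter_iff]
    exact ⟨fun h x hx => ⟨h.1 hx, h.2 hx⟩,
      fun h => ⟨fun x hx => (h x hx).1, fun x hx => (h x hx).2⟩⟩
  rw [hset]
  exact isClosed_biInter fun x _ => (K.isClosed.preimage (by fun_prop)).inter
    (K.isClosed.preimage (by fun_prop))

end NormedSpace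

section InnerProductSpace

variable [InnerProductSpace ℝ V] [FiniteDimensional ℝ V] {K : ProperCone ℝ V}

lemma isCompact_coneAut_norm_le (K : ProperCone ℝ V) (M : ℝ) :
    IsCompact {A : (V →L[ℝ] V)ˣ |
      A ∈ coneAut K ∧ ‖(A : V →L[ℝ] V)‖ ≤ M ∧ ‖(↑A⁻¹ : V →L[ℝ] V)‖ ≤ M} := by
  have hball : IsCompact (Metric.closedBall (0 : V →L[ℝ] V) M ×ˢ
      (MulOpposite.opHomeomorph '' Metric.closedBall (0 : V →L[ℝ] V) M)) :=
    (isCompact_closedBall _ _).prod ((isCompact_closedBall _ _).image (Homeomorph.continuous _))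
  refine ((Units.isClosedEmbedding_embedProduct.isCompact_preimage hball).inter_left
    (isClosed_coneAut K)).of_isClosed_subset ?_ ?_
  · refine (isClosed_coneAut K).inter (IsClosed.inter ?_ ?_)
    · exact isClosed_le (Units.continuous_val.norm) continuous_const
    · exact isClosed_le (Units.continuous_coe_inv.norm) continuous_const
  · rintro A ⟨hA, hnorm, hinv⟩
    exact ⟨hA, by simpa using hnorm, ⟨_, by simpa using hinv, rfl⟩⟩

lemma IsSelfDual.isCompact_coneAut_smul_eq (hK : IsSelfDual K) {u x : V}
    (hu : u ∈ interior (K : Set V)) (hx : x ∈ interior (K : Set V)) :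
    IsCompact {A : (V →L[ℝ] V)ˣ | A ∈ coneAut K ∧ A • u = x} := by
  obtain ⟨r, hr, hur⟩ := exists_closedBall_subset_of_mem_interior hu
  obtain ⟨s, hs, hxs⟩ := exists_closedBall_subset_of_mem_interior hx
  refine (isCompact_coneAut_norm_le K (max (‖x‖ / r) (‖u‖ / s))).of_isClosed_subset
    ((isClosed_coneAut K).inter (isClosed_eq (by fun_prop) continuous_const)) ?_
  rintro A ⟨hA, rfl⟩
  refine ⟨hA, le_max_of_le_left ?_, le_max_of_le_right ?_⟩
  · rw [le_div_iff₀' hr]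
    exact hK.opNorm_mul_le hr hur (mapsTo_of_mem_coneAut hA)
  · rw [le_div_iff₀' hs]
    conv_rhs => rw [← inv_smul_smul A u]
    exact hK.opNorm_mul_le hs hxs (mapsTo_of_mem_coneAut (inv_mem hA))

/-- Among the automorphisms of `K` that agree with `A` at `u`, the automorphism `A` is nearest to
the identity. -/
def IsNearestOneAt (K : ProperCone ℝ V) (u : V) (A : (V →L[ℝ] V)ˣ) : Prop :=
  A ∈ coneAut K ∧ ∀ B ∈ coneAut K, B • u = A • u → ‖(A : V →L[ℝ] V) - 1‖ ≤ ‖(B : V →L[ℝ] V) - 1‖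

lemma IsSelfDual.exists_isNearestOneAt (hK : IsSelfDual K) {u : V} (hu : u ∈ interior (K : Set V))
    {A₀ : (V →L[ℝ] V)ˣ} (hA₀ : A₀ ∈ coneAut K) : ∃ A, IsNearestOneAt K u A ∧ A • u = A₀ • u := by
  obtain ⟨A, ⟨hA, hAu⟩, hmin⟩ :=
    (hK.isCompact_coneAut_smul_eq hu (smul_mem_interior_of_mem_coneAut hA₀ hu)).exists_isMinOn
      ⟨A₀, hA₀, rfl⟩ (f := fun A => ‖(A : V →L[ℝ] V) - 1‖)
      (Units.continuous_val.sub continuous_const).norm.continuousOn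
  exact ⟨A, ⟨hA, fun B hB hBu => hmin ⟨hB, hBu.trans hAu⟩⟩, hAu⟩

-- The open mapping theorem for actions of σ-compact groups on Baire spaces.
lemma IsHomogeneousCone.eventually_exists_norm_sub_one_lt (hhom : IsHomogeneousCone K) {u : V}
    (hu : u ∈ interior (K : Set V)) {ε : ℝ} (hε : 0 < ε) :
    ∀ᶠ x in 𝓝 u, ∃ A ∈ coneAut K, A • u = x ∧ ‖(A : V →L[ℝ] V) - 1‖ < ε := by
  let X : SubMulAction (coneAut K) V :=
    { carrier := interior K
      smul_mem' := fun A _ hx => smul_mem_interior_of_mem_coneAut A.2 hx }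
  have : BaireSpace X := (isOpen_interior (s := (K : Set V))).baireSpace
  have : SigmaCompactSpace (V →L[ℝ] V)ˣ := Units.isClosedEmbedding_embedProduct.sigmaCompactSpace
  have : SigmaCompactSpace (coneAut K) := (isClosed_coneAut K).sigmaCompactSpace
  have : MulAction.IsPretransitive (coneAut K) X := ⟨fun x y => by
    obtain ⟨A, hA, hAx⟩ := hhom x x.2 y y.2
    exact ⟨⟨A, hA⟩, Subtype.ext hAx⟩⟩
  have : ContinuousSMul (coneAut K) X := ⟨by
    refine Continuous.subtype_mk (f := fun p : coneAut K × X => p.1 • (p.2 : V)) ?_ _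
    fun_prop⟩
  let N : Set (coneAut K) := {A | ‖((A : (V →L[ℝ] V)ˣ) : V →L[ℝ] V) - 1‖ < ε}
  have hN : N ∈ 𝓝 1 := by
    refine IsOpen.mem_nhds (isOpen_lt ?_ continuous_const) (by simpa [N] using hε)
    exact ((Units.continuous_val.comp continuous_subtype_val).sub continuous_const).norm
  have hNu := smul_singleton_mem_nhds_of_sigmaCompact hN (⟨u, hu⟩ : X)
  filter_upwards [isOpen_interior.isOpenMap_subtype_val.image_mem_nhds hNu] with x hx
  obtain ⟨_, ⟨A, hA, _, rfl, rfl⟩, rfl⟩ := hx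
  exact ⟨A.1, A.2, rfl, hA⟩

end InnerProductSpace

end AutomorphismGroup

section ExpUnit

variable {𝔸 : Type*} [NormedRing 𝔸] [NormedAlgebra ℝ 𝔸] [CompleteSpace 𝔸]

lemma exp_mul_exp_neg (x : 𝔸) : NormedSpace.exp x * NormedSpace.exp (-x) = 1 := by
  let : NormedAlgebra ℚ 𝔸 := NormedAlgebra.restrictScalars ℚ ℝ 𝔸
  rw [← NormedSpace.exp_add_of_commute (Commute.refl x).neg_right, add_neg_cancel,
    NormedSpace.exp_zero]

/-- The exponential of `x` as a unit of the algebra, with inverse `exp (-x)`. -/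
@[simps]
def expUnit (x : 𝔸) : 𝔸ˣ where
  val := NormedSpace.exp x
  inv := NormedSpace.exp (-x)
  val_inv := exp_mul_exp_neg x
  inv_val := by simpa using exp_mul_exp_neg (-x)

lemma tendsto_inv_smul_exp_smul_sub_one (x : 𝔸) :
    Tendsto (fun t : ℝ => t⁻¹ • (NormedSpace.exp (t • x) - 1)) (𝓝[≠] 0) (𝓝 x) :=
  (hasDerivAt_exp_smul_zero x).tendsto_slope.congr fun t => by simp [slope, NormedSpace.exp_zero]

end ExpUnit

section ExpApply

variable {V : Type*} [NormedAddCommGroup V] [NormedSpace ℝ V] [CompleteSpace V]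

lemma hasDerivAt_exp_smul_apply_zero (X : V →L[ℝ] V) (v : V) :
    HasDerivAt (fun t : ℝ => NormedSpace.exp (t • X) v) (X v) 0 := by
  simpa using! (hasDerivAt_exp_smul_zero X).clm_apply (hasDerivAt_const (0 : ℝ) v)

lemma exp_apply_of_apply_eq_zero {X : V →L[ℝ] V} {u : V} (hu : X u = 0) :
    NormedSpace.exp X u = u := by
  have hderiv (t : ℝ) : HasDerivAt (fun s : ℝ => NormedSpace.exp (s • X) u) 0 t := by
    simpa [hu] using! (hasDerivAt_exp_smul_const X t).clm_apply (hasDerivAt_const t u)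
  have h := is_const_of_deriv_eq_zero (fun t => (hderiv t).differentiableAt)
    (fun t => (hderiv t).deriv) 1 0
  simpa [NormedSpace.exp_zero] using! h

end ExpApply

section Tangent

variable {V : Type*} [NormedAddCommGroup V] [InnerProductSpace ℝ V] [FiniteDimensional ℝ V]
  {K : ProperCone ℝ V}

lemma IsSelfDual.expUnit_mem_coneAut (hK : IsSelfDual K) {X : V →L[ℝ] V}
    (hX : X ∈ coneLieAlgebra K) : expUnit X ∈ coneAut K :=
  mem_coneAut_iff_mapsTo.2 ⟨hK.exp_mapsTo hK.interior_nonempty hX,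
    hK.exp_mapsTo hK.interior_nonempty (neg_mem hX)⟩

lemma IsSelfDual.inner_apply_nonneg_of_tendsto (hK : IsSelfDual K) {A : ℕ → V →L[ℝ] V}
    {X : V →L[ℝ] V} {m : ℕ → ℝ} (hA : ∀ n, MapsTo (A n) K K) (hm : ∀ n, 0 ≤ m n)
    (hX : Tendsto (fun n => m n • (A n - 1)) atTop (𝓝 X)) {x y : V} (hx : x ∈ K) (hy : y ∈ K)
    (hxy : ⟪x, y⟫ = 0) : 0 ≤ ⟪X x, y⟫ := by
  have hlim : Tendsto (fun n => ⟪(m n • (A n - 1)) x, y⟫) atTop (𝓝 ⟪X x, y⟫) :=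
    (((ContinuousLinearMap.apply ℝ V x).continuous.tendsto X).comp hX).inner tendsto_const_nhds
  refine ge_of_tendsto' hlim fun n => ?_
  rw [smul_apply, sub_apply, one_apply_eq_self, real_inner_smul_left, inner_sub_left, hxy, sub_zero]
  exact mul_nonneg (hm n) (hK.inner_nonneg (hA n hx) hy)

lemma IsSelfDual.mem_coneLieAlgebra_of_tendsto (hK : IsSelfDual K) {A : ℕ → (V →L[ℝ] V)ˣ}
    {X : V →L[ℝ] V} {m : ℕ → ℝ} (hA : ∀ n, A n ∈ coneAut K) (hm : ∀ n, 0 ≤ m n)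
    (hA₁ : Tendsto A atTop (𝓝 1))
    (hX : Tendsto (fun n => m n • ((A n : V →L[ℝ] V) - 1)) atTop (𝓝 X)) :
    X ∈ coneLieAlgebra K := by
  have hinv : Tendsto (fun n => (↑(A n)⁻¹ : V →L[ℝ] V)) atTop (𝓝 1) := by
    simpa using! (Units.continuous_coe_inv.tendsto 1).comp hA₁
  have hXinv : Tendsto (fun n => m n • ((↑(A n)⁻¹ : V →L[ℝ] V) - 1)) atTop (𝓝 (-X)) := by
    refine (((hinv.mul hX).neg).congr fun n => ?_).trans_eq (by rw [one_mul])
    rw [mul_smul_comm, mul_sub, Units.inv_mul, mul_one, ← smul_neg, neg_sub]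
  intro x hx y hy hxy
  refine le_antisymm ?_ (hK.inner_apply_nonneg_of_tendsto
    (fun n => mapsTo_of_mem_coneAut (hA n)) hm hX hx hy hxy)
  have h := hK.inner_apply_nonneg_of_tendsto
    (fun n => mapsTo_of_mem_coneAut (inv_mem (hA n))) hm hXinv hx hy hxy
  rwa [neg_apply, inner_neg_left, neg_nonneg] at h

lemma IsSelfDual.exists_seq_isNearestOneAt (hK : IsSelfDual K) (hhom : IsHomogeneousCone K)
    {u v : V} (hu : u ∈ interior (K : Set V)) (hv : v ≠ 0) :
    ∃ A : ℕ → (V →L[ℝ] V)ˣ, Tendsto A atTop (𝓝 1) ∧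
      ∀ n, IsNearestOneAt K u (A n) ∧ A n ≠ 1 ∧ A n • u - u ∈ ℝ ∙ v := by
  have hstep (n : ℕ) : ∃ A : (V →L[ℝ] V)ˣ, ‖(A : V →L[ℝ] V) - 1‖ < 1 / ((n : ℝ) + 1) ∧
      IsNearestOneAt K u A ∧ A ≠ 1 ∧ A • u - u ∈ ℝ ∙ v := by
    have hline : Tendsto (fun t : ℝ => u + t • v) (𝓝[≠] 0) (𝓝 u) := by
      refine tendsto_nhdsWithin_of_tendsto_nhds (Continuous.tendsto' (by fun_prop) _ _ (by simp))
    obtain ⟨t, ⟨B, hB, hBu, hB₁⟩, ht⟩ := ((hline.eventually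
      (hhom.eventually_exists_norm_sub_one_lt hu Nat.one_div_pos_of_nat)).and
      eventually_mem_nhdsWithin).exists
    obtain ⟨A, hA, hAu⟩ := hK.exists_isNearestOneAt hu hB
    rw [hBu] at hAu
    refine ⟨A, (hA.2 B hB (hBu.trans hAu.symm)).trans_lt hB₁, hA, ?_, ?_⟩
    · rintro rfl
      rw [one_smul, left_eq_add, smul_eq_zero] at hAu
      exact hAu.elim ht hv
    · rw [hAu, add_sub_cancel_left]
      exact Submodule.smul_mem _ t (Submodule.mem_span_singleton_self v)
  choose A hA₁ hA using hstep
  refine ⟨A, Units.isOpenEmbedding_val.tendsto_nhds_iff.2 ?_, hA⟩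
  exact tendsto_iff_norm_sub_tendsto_zero.2 (squeeze_zero (fun _ => norm_nonneg _)
    (fun n => (hA₁ n).le) tendsto_one_div_add_atTop_nhds_zero_nat)

-- If `X u = 0`, then `A n * exp (-‖A n - 1‖ • X)` agrees with `A n` at `u` and is eventually nearer
-- to the identity.
lemma IsSelfDual.apply_ne_zero_of_isNearestOneAt (hK : IsSelfDual K) {u : V}
    {A : ℕ → (V →L[ℝ] V)ˣ} {X : V →L[ℝ] V} (hA : ∀ n, IsNearestOneAt K u (A n))
    (hA_ne : ∀ n, A n ≠ 1) (hA₁ : Tendsto A atTop (𝓝 1)) (hXmem : X ∈ coneLieAlgebra K)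
    (hX : Tendsto (fun n => ‖(A n : V →L[ℝ] V) - 1‖⁻¹ • ((A n : V →L[ℝ] V) - 1)) atTop (𝓝 X)) :
    X u ≠ 0 := by
  intro hXu
  let m : ℕ → ℝ := fun n => ‖(A n : V →L[ℝ] V) - 1‖
  let B : ℕ → (V →L[ℝ] V)ˣ := fun n => A n * expUnit (m n • -X)
  have hm_pos (n : ℕ) : 0 < m n :=
    norm_pos_iff.2 (sub_ne_zero.2 fun h => hA_ne n (Units.val_eq_one.1 h))
  have hA₁' : Tendsto (fun n => (A n : V →L[ℝ] V)) atTop (𝓝 1) :=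
    (Units.continuous_val.tendsto 1).comp hA₁
  have hm : Tendsto m atTop (𝓝[≠] 0) := tendsto_nhdsWithin_iff.2
    ⟨by simpa [m] using! (hA₁'.sub_const 1).norm, Eventually.of_forall fun n => (hm_pos n).ne'⟩
  have hB_zero : Tendsto (fun n => (m n)⁻¹ • ((B n : V →L[ℝ] V) - 1)) atTop (𝓝 0) := by
    have hexp := (tendsto_inv_smul_exp_smul_sub_one (-X)).comp hm
    refine ((hX.add (hA₁'.mul hexp)).congr fun n => ?_).trans_eq (by simp)
    simp only [B, m, Function.comp_apply, Units.val_mul, val_expUnit, mul_smul_comm]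
    rw [← smul_add, mul_sub, mul_one]
    congr 1
    abel
  have hB_norm (n : ℕ) : 1 ≤ ‖(m n)⁻¹ • ((B n : V →L[ℝ] V) - 1)‖ := by
    have hBu : B n • u = A n • u := by
      rw [mul_smul]
      congr 1
      exact exp_apply_of_apply_eq_zero (by simp [hXu])
    have hBmem : B n ∈ coneAut K :=
      mul_mem (hA n).1 (hK.expUnit_mem_coneAut (Submodule.smul_mem _ _ (neg_mem hXmem)))
    rw [norm_smul, norm_inv, Real.norm_of_nonneg (hm_pos n).le, ← div_eq_inv_mul,
      one_le_div (hm_pos n)]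
    exact (hA n).2 _ hBmem hBu
  have := ge_of_tendsto' hB_zero.norm hB_norm
  rw [norm_zero] at this
  exact zero_lt_one.not_ge this

lemma IsHomogeneousCone.exists_mem_coneLieAlgebra_apply_eq (hhom : IsHomogeneousCone K)
    (hK : IsSelfDual K) {u : V} (hu : u ∈ interior (K : Set V)) (v : V) :
    ∃ X ∈ coneLieAlgebra K, X u = v := by
  rcases eq_or_ne v 0 with rfl | hv
  · exact ⟨0, zero_mem _, rfl⟩
  obtain ⟨A, hA₁, hA⟩ := hK.exists_seq_isNearestOneAt hhom hu hv
  let Y : ℕ → V →L[ℝ] V := fun n => ‖(A n : V →L[ℝ] V) - 1‖⁻¹ • ((A n : V →L[ℝ] V) - 1)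
  have hY_sphere (n : ℕ) : Y n ∈ Metric.sphere (0 : V →L[ℝ] V) 1 := by
    rw [mem_sphere_zero_iff_norm]
    exact norm_smul_inv_norm (𝕜 := ℝ)
      (sub_ne_zero.2 fun h => (hA n).2.1 (Units.val_eq_one.1 h))
  obtain ⟨X, -, φ, hφ, hX⟩ := (isCompact_sphere (0 : V →L[ℝ] V) 1).tendsto_subseq hY_sphere
  have hAφ := hA₁.comp hφ.tendsto_atTop
  have hXmem : X ∈ coneLieAlgebra K := hK.mem_coneLieAlgebra_of_tendsto
    (fun n => (hA (φ n)).1.1) (fun _ => by positivity) hAφ hX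
  have hXu : X u ≠ 0 := hK.apply_ne_zero_of_isNearestOneAt (fun n => (hA (φ n)).1)
    (fun n => (hA (φ n)).2.1) hAφ hXmem hX
  have hXspan : X u ∈ ℝ ∙ v := (ℝ ∙ v).closed_of_finiteDimensional.mem_of_tendsto
    (((ContinuousLinearMap.apply ℝ V u).continuous.tendsto X).comp hX)
    (Eventually.of_forall fun n => Submodule.smul_mem _ _ (hA (φ n)).2.2)
  obtain ⟨c, hc⟩ := Submodule.mem_span_singleton.1 hXspan
  have hc₀ : c ≠ 0 := by
    rintro rfl
    exact hXu (by rw [← hc, zero_smul])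
  exact ⟨c⁻¹ • X, Submodule.smul_mem _ _ hXmem, by
    rw [smul_apply, ← hc, inv_smul_smul₀ hc₀]⟩

end Tangent

section Centre

lemma exists_forall_norm_le_imp_eq {E : Type*} [NormedAddCommGroup E] [InnerProductSpace ℝ E]
    {D : Set E} (hne : D.Nonempty) (hcomplete : IsComplete D) (hconvex : Convex ℝ D) :
    ∃ e ∈ D, ∀ x ∈ D, ‖x‖ ≤ ‖e‖ → x = e := by
  obtain ⟨e, he, hmin⟩ := exists_norm_eq_iInf_of_complete_convex hne hcomplete hconvex 0
  refine ⟨e, he, fun x hx hxe => sub_eq_zero.1 (norm_eq_zero.1 (pow_eq_zero_iff two_ne_zero |>.1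
    (le_antisymm ?_ (sq_nonneg _))))⟩
  have hproj := (norm_eq_iInf_iff_real_inner_le_zero hconvex he).1 hmin x hx
  rw [zero_sub, inner_neg_left, inner_sub_right, real_inner_self_eq_norm_sq] at hproj
  have hsq : ‖x‖ ^ 2 ≤ ‖e‖ ^ 2 := by gcongr
  rw [norm_sub_sq_real, real_inner_comm]
  linarith

variable {V : Type*} [NormedAddCommGroup V] [InnerProductSpace ℝ V]

section CompleteSpace

variable [CompleteSpace V] {K : ProperCone ℝ V}

lemma IsSelfDual.setOf_closedBall_subset_eq (hK : IsSelfDual K) {r : ℝ} (hr : 0 ≤ r) :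
    {x | Metric.closedBall x r ⊆ (K : Set V)} = ⋂ y ∈ K, {x | r * ‖y‖ ≤ ⟪x, y⟫} := by
  ext x
  simp only [mem_ofPred_eq, mem_iInter, hK.closedBall_subset_iff hr]

lemma norm_exp_apply_of_adjoint_eq_neg {Y : V →L[ℝ] V} (hY : adjoint Y = -Y) (v : V) :
    ‖NormedSpace.exp Y v‖ = ‖v‖ := by
  let : NormedAlgebra ℚ (V →L[ℝ] V) := NormedAlgebra.restrictScalars ℚ ℝ _
  have hadj : adjoint (NormedSpace.exp Y) = NormedSpace.exp (-Y) := by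
    simpa [ContinuousLinearMap.star_eq_adjoint, hY] using NormedSpace.star_exp Y
  have hmul : NormedSpace.exp (-Y) * NormedSpace.exp Y = 1 := by
    simpa using exp_mul_exp_neg (-Y)
  refine (pow_left_inj₀ (norm_nonneg _) (norm_nonneg _) two_ne_zero).1 ?_
  rw [← real_inner_self_eq_norm_sq, ← real_inner_self_eq_norm_sq,
    ← ContinuousLinearMap.adjoint_inner_left, hadj, ← mul_apply_eq_comp, hmul, one_apply_eq_self]

end CompleteSpace

variable [FiniteDimensional ℝ V] {K : ProperCone ℝ V}

-- The point of least norm in the closed convex set `{x | closedBall x 1 ⊆ K}` is fixed by every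
-- orthogonal automorphism of `K`, hence killed by the skew elements `X - X†` of the Lie algebra.
lemma IsSelfDual.exists_closedBall_subset_adjoint_apply_eq (hK : IsSelfDual K) :
    ∃ e, Metric.closedBall e 1 ⊆ (K : Set V) ∧
      ∀ X ∈ coneLieAlgebra K, adjoint X e = X e := by
  let D : Set V := {x | Metric.closedBall x 1 ⊆ (K : Set V)}
  have hD : D = ⋂ y ∈ K, {x | 1 * ‖y‖ ≤ ⟪x, y⟫} := hK.setOf_closedBall_subset_eq zero_le_one
  have hclosed : IsClosed D := hD ▸ isClosed_biInter fun y _ =>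
    isClosed_le continuous_const (by fun_prop)
  have hconvex : Convex ℝ D := hD ▸ convex_iInter₂ fun y _ =>
    convex_halfSpace_ge ⟨fun a b => inner_add_left a b y, fun c a => real_inner_smul_left a y c⟩ _
  have hne : D.Nonempty := by
    obtain ⟨u, hu⟩ := hK.interior_nonempty
    obtain ⟨r, hr, hur⟩ := exists_closedBall_subset_of_mem_interior hu
    refine ⟨r⁻¹ • u, (hK.closedBall_subset_iff zero_le_one).2 fun y hy => ?_⟩
    rw [one_mul, real_inner_smul_left, le_inv_mul_iff₀ hr]
    exact (hK.closedBall_subset_iff hr.le).1 hur y hy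
  obtain ⟨e, he, hmin⟩ := exists_forall_norm_le_imp_eq hne hclosed.isComplete hconvex
  refine ⟨e, he, fun X hX => ?_⟩
  let Y := X - adjoint X
  have hYmem : Y ∈ coneLieAlgebra K := sub_mem hX (adjoint_mem_coneLieAlgebra hX)
  have hfix (t : ℝ) : NormedSpace.exp (t • Y) e = e := by
    have hnorm (v : V) : ‖NormedSpace.exp (t • Y) v‖ = ‖v‖ :=
      norm_exp_apply_of_adjoint_eq_neg (by simp [Y, ← smul_neg]) v
    exact hmin _ (closedBall_smul_subset_of_mem_coneAut
      (hK.expUnit_mem_coneAut (Submodule.smul_mem _ t hYmem)) hnorm he) (hnorm e).le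
  have hderiv := hasDerivAt_exp_smul_apply_zero Y e
  simp only [hfix] at hderiv
  have hYe : Y e = 0 := hderiv.unique (hasDerivAt_const _ _)
  exact (sub_eq_zero.1 hYe).symm

end Centre

section Scaling

variable {V : Type*} [NormedAddCommGroup V] [InnerProductSpace ℝ V] [FiniteDimensional ℝ V]
  {K : ProperCone ℝ V}

/-- The functional on automorphisms of a cone whose minimiser is a scaling of the pair `(x, y)`. -/
def scalingObjective (e x y : V) (A : (V →L[ℝ] V)ˣ) : ℝ := ⟪e, A • x⟫ + ⟪A⁻¹ • e, y⟫

lemma IsSelfDual.norm_le_scalingObjective (hK : IsSelfDual K) {e x y : V}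
    (he : Metric.closedBall e 1 ⊆ (K : Set V)) {r : ℝ} (hr : 0 < r)
    (hx : Metric.closedBall x r ⊆ (K : Set V)) (hy : Metric.closedBall y r ⊆ (K : Set V))
    {A : (V →L[ℝ] V)ˣ} (hA : A ∈ coneAut K) :
    ‖(A : V →L[ℝ] V)‖ ≤ scalingObjective e x y A / r ∧
      ‖(↑A⁻¹ : V →L[ℝ] V)‖ ≤ scalingObjective e x y A / r := by
  have hxK : x ∈ K := hx (Metric.mem_closedBall_self hr.le)
  have heK : e ∈ K := he (Metric.mem_closedBall_self zero_le_one)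
  have hAx : A • x ∈ K := mapsTo_of_mem_coneAut hA hxK
  have hAe : A⁻¹ • e ∈ K := mapsTo_of_mem_coneAut (inv_mem hA) heK
  have hfst : r * ‖(A : V →L[ℝ] V)‖ ≤ ⟪e, A • x⟫ :=
    calc r * ‖(A : V →L[ℝ] V)‖ ≤ 1 * ‖A • x‖ := by
          rw [one_mul]
          exact hK.opNorm_mul_le hr hx (mapsTo_of_mem_coneAut hA)
      _ ≤ ⟪e, A • x⟫ := (hK.closedBall_subset_iff zero_le_one).1 he _ hAx
  have hsnd : r * ‖(↑A⁻¹ : V →L[ℝ] V)‖ ≤ ⟪A⁻¹ • e, y⟫ :=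
    calc r * ‖(↑A⁻¹ : V →L[ℝ] V)‖ ≤ r * ‖A⁻¹ • e‖ := by
          gcongr
          rw [← one_mul ‖(↑A⁻¹ : V →L[ℝ] V)‖]
          exact hK.opNorm_mul_le one_pos he (mapsTo_of_mem_coneAut (inv_mem hA))
      _ ≤ ⟪y, A⁻¹ • e⟫ := (hK.closedBall_subset_iff hr.le).1 hy _ hAe
      _ = ⟪A⁻¹ • e, y⟫ := real_inner_comm _ _
  have hnonneg : 0 ≤ r * ‖(A : V →L[ℝ] V)‖ ∧ 0 ≤ r * ‖(↑A⁻¹ : V →L[ℝ] V)‖ := by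
    constructor <;> positivity
  rw [le_div_iff₀' hr, le_div_iff₀' hr, scalingObjective]
  constructor <;> linarith

lemma IsSelfDual.exists_isMinOn_scalingObjective (hK : IsSelfDual K) {e x y : V}
    (he : Metric.closedBall e 1 ⊆ (K : Set V)) (hx : x ∈ interior (K : Set V))
    (hy : y ∈ interior (K : Set V)) :
    ∃ A ∈ coneAut K, IsMinOn (scalingObjective e x y) (coneAut K) A := by
  obtain ⟨r, hr, hxr⟩ := exists_closedBall_subset_of_mem_interior hx
  obtain ⟨s, hs, hys⟩ := exists_closedBall_subset_of_mem_interior hy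
  have hcont : Continuous (scalingObjective e x y) := by
    unfold scalingObjective
    fun_prop
  refine hcont.continuousOn.exists_isMinOn' (isClosed_coneAut K) (one_mem _) ?_
  rw [eventually_inf_principal, Filter.eventually_iff, mem_cocompact]
  let M := scalingObjective e x y 1 / min r s
  refine ⟨_, isCompact_coneAut_norm_le K M, fun A hAM hAK => ?_⟩
  by_contra hlt
  obtain ⟨hnorm, hinv⟩ := hK.norm_le_scalingObjective he (lt_min hr hs)
    ((Metric.closedBall_subset_closedBall (min_le_left r s)).trans hxr)
    ((Metric.closedBall_subset_closedBall (min_le_right r s)).trans hys) hAK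
  have hM : scalingObjective e x y A / min r s ≤ M :=
    div_le_div_of_nonneg_right (not_le.1 hlt).le (lt_min hr hs).le
  exact hAM ⟨hAK, hnorm.trans hM, hinv.trans hM⟩

lemma hasDerivAt_scalingObjective_exp_mul (e x y : V) (A : (V →L[ℝ] V)ˣ) (X : V →L[ℝ] V) :
    HasDerivAt (fun t : ℝ => scalingObjective e x y (expUnit (t • X) * A))
      (⟪e, X (A • x)⟫ - ⟪X e, adjoint (↑A⁻¹ : V →L[ℝ] V) y⟫) 0 := by
  have hobj (t : ℝ) : scalingObjective e x y (expUnit (t • X) * A) =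
      ⟪e, NormedSpace.exp (t • X) (A • x)⟫ +
        ⟪NormedSpace.exp (t • -X) e, adjoint (↑A⁻¹ : V →L[ℝ] V) y⟫ := by
    rw [ContinuousLinearMap.adjoint_inner_right, smul_neg, scalingObjective, mul_inv_rev,
      mul_smul, mul_smul]
    rfl
  simp only [hobj]
  have hfst := (hasDerivAt_const (0 : ℝ) e).inner ℝ (hasDerivAt_exp_smul_apply_zero X (A • x))
  have hsnd := (hasDerivAt_exp_smul_apply_zero (-X) e).inner ℝ
    (hasDerivAt_const (0 : ℝ) (adjoint (↑A⁻¹ : V →L[ℝ] V) y))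
  exact (hfst.add hsnd).congr_deriv (by simp [sub_eq_add_neg, NormedSpace.exp_zero])

lemma IsHomogeneousCone.exists_smul_eq_adjoint_inv_apply (hhom : IsHomogeneousCone K)
    (hK : IsSelfDual K) {x y : V} (hx : x ∈ interior (K : Set V)) (hy : y ∈ interior (K : Set V)) :
    ∃ A ∈ coneAut K, A • x = adjoint (↑A⁻¹ : V →L[ℝ] V) y := by
  obtain ⟨e, he, he_adj⟩ := hK.exists_closedBall_subset_adjoint_apply_eq
  have he_int : e ∈ interior (K : Set V) :=
    mem_interior_iff_mem_nhds.2 (mem_of_superset (Metric.closedBall_mem_nhds e one_pos) he)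
  obtain ⟨A, hA, hmin⟩ := hK.exists_isMinOn_scalingObjective he hx hy
  refine ⟨A, hA, ?_⟩
  set a := A • x
  set b := adjoint (↑A⁻¹ : V →L[ℝ] V) y
  obtain ⟨X, hX, hXe⟩ := hhom.exists_mem_coneLieAlgebra_apply_eq hK he_int (a - b)
  have hcrit : ⟪e, X a⟫ - ⟪X e, b⟫ = 0 := by
    refine IsLocalMin.hasDerivAt_eq_zero (Eventually.of_forall fun t => ?_)
      (hasDerivAt_scalingObjective_exp_mul e x y A X)
    have hone : expUnit ((0 : ℝ) • X) * A = A := by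
      rw [mul_eq_right]
      exact Units.ext (by simp [NormedSpace.exp_zero])
    simp only [hone]
    exact hmin (mul_mem (hK.expUnit_mem_coneAut (Submodule.smul_mem _ t hX)) hA)
  rw [← ContinuousLinearMap.adjoint_inner_left, he_adj X hX, hXe, ← inner_sub_right] at hcrit
  exact sub_eq_zero.1 (inner_self_eq_zero.1 hcrit)

end Scaling

section L1Cone

variable {V ι : Type*} [NormedAddCommGroup V] [NormedSpace ℝ V] {K : ProperCone ℝ V}

/-- The maximal tensor product of `K` with the cone over the `ℓ∞` ball, in coordinates: the pair
`(w₀, w)` stands for the tensor `w₀ ⊗ (1, 0) + ∑ i, w i ⊗ (0, eᵢ)`, which is tested against the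
extreme points `(1, ± eᵢ)` of the dual cone; this requires `ι` to be nonempty. -/
def maxLinftyCone (K : ProperCone ℝ V) (ι : Type*) : Set (V × (ι → V)) :=
  {q | ∀ i, q.1 + q.2 i ∈ K ∧ q.1 - q.2 i ∈ K}

lemma fst_mem_of_mem_maxLinftyCone [Nonempty ι] {q : V × (ι → V)} (hq : q ∈ maxLinftyCone K ι) :
    q.1 ∈ K := by
  obtain ⟨hadd, hsub⟩ := hq (Classical.arbitrary ι)
  convert K.smul_mem (K.add_mem hadd hsub) (by norm_num : (0 : ℝ) ≤ 2⁻¹) using 1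
  module

lemma add_fst_mem_maxLinftyCone {q : V × (ι → V)} (hq : q ∈ maxLinftyCone K ι) {u : V}
    (hu : u ∈ K) : (q.1 + u, q.2) ∈ maxLinftyCone K ι := fun i => by
  rw [add_right_comm, add_sub_right_comm]
  exact ⟨K.add_mem (hq i).1 hu, K.add_mem (hq i).2 hu⟩

lemma map_mem_maxLinftyCone {A : V →L[ℝ] V} (hA : MapsTo A K K) {q : V × (ι → V)}
    (hq : q ∈ maxLinftyCone K ι) : (A q.1, fun i => A (q.2 i)) ∈ maxLinftyCone K ι := fun i =>
  ⟨by simpa only [map_add, SetLike.mem_coe] using hA (hq i).1,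
    by simpa only [map_sub, SetLike.mem_coe] using hA (hq i).2⟩

variable [Fintype ι]

/-- The maximal tensor product of `K` with the cone over the `ℓ₁` ball, in the coordinates of
`maxLinftyCone`, tested against the points `(1, ε)` of the dual cone. -/
def maxL1Cone (K : ProperCone ℝ V) (ι : Type*) [Fintype ι] : Set (V × (ι → V)) :=
  {q | ∀ ε : ι → ℝ, (∀ i, |ε i| ≤ 1) → q.1 + ∑ i, ε i • q.2 i ∈ K}

lemma fst_mem_of_mem_maxL1Cone {q : V × (ι → V)} (hq : q ∈ maxL1Cone K ι) : q.1 ∈ K := by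
  simpa using hq 0 (by simp)

lemma add_fst_mem_maxL1Cone {q : V × (ι → V)} (hq : q ∈ maxL1Cone K ι) {u : V} (hu : u ∈ K) :
    (q.1 + u, q.2) ∈ maxL1Cone K ι := fun ε hε => by
  rw [add_right_comm]
  exact K.add_mem (hq ε hε) hu

lemma map_mem_maxL1Cone {A : V →L[ℝ] V} (hA : MapsTo A K K) {q : V × (ι → V)}
    (hq : q ∈ maxL1Cone K ι) : (A q.1, fun i => A (q.2 i)) ∈ maxL1Cone K ι := fun ε hε => by
  simpa only [map_add, map_sum, map_smul, SetLike.mem_coe] using hA (hq ε hε)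

/-- The linear map sending `(a, b)` to the coordinates, as in `maxLinftyCone`, of the tensor
`∑ i, (a i ⊗ (1, eᵢ) + b i ⊗ (1, -eᵢ))`. -/
def minL1Map (V ι : Type*) [NormedAddCommGroup V] [NormedSpace ℝ V] [Fintype ι] :
    (ι → V) × (ι → V) →L[ℝ] V × (ι → V) :=
  (∑ i, (ContinuousLinearMap.proj i ∘L ContinuousLinearMap.fst ℝ (ι → V) (ι → V) +
    ContinuousLinearMap.proj i ∘L ContinuousLinearMap.snd ℝ (ι → V) (ι → V))).prod
  (ContinuousLinearMap.fst ℝ (ι → V) (ι → V) - ContinuousLinearMap.snd ℝ (ι → V) (ι → V))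

lemma minL1Map_apply (a b : ι → V) : minL1Map V ι (a, b) = (∑ i, (a i + b i), a - b) := by
  simp [minL1Map]

/-- The minimal tensor product of `K` with the cone over the `ℓ₁` ball, in the coordinates of
`maxLinftyCone`. -/
def minL1Cone (K : ProperCone ℝ V) (ι : Type*) [Fintype ι] : PointedCone ℝ (V × (ι → V)) :=
  PointedCone.map (minL1Map V ι : (ι → V) × (ι → V) →ₗ[ℝ] V × (ι → V))
    ((Submodule.pi univ fun _ => (K : PointedCone ℝ V)).prod
      (Submodule.pi univ fun _ => (K : PointedCone ℝ V)))

lemma mem_minL1Cone {q : V × (ι → V)} : q ∈ minL1Cone K ι ↔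
    ∃ a b : ι → V, (∀ i, a i ∈ K) ∧ (∀ i, b i ∈ K) ∧ (∑ i, (a i + b i), a - b) = q := by
  simp [minL1Cone, minL1Map_apply, PointedCone.mem_map, and_assoc]

end L1Cone

section Pairing

lemma exists_signs_sum_norm_sq_le {E ι : Type*} [SeminormedAddCommGroup E] [InnerProductSpace ℝ E]
    (z : ι → E) (s : Finset ι) :
    ∃ ε : ι → ℝ, (∀ i, |ε i| = 1) ∧ ∑ i ∈ s, ‖z i‖ ^ 2 ≤ ‖∑ i ∈ s, ε i • z i‖ ^ 2 := by
  classical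
  induction s using Finset.induction_on with
  | empty => exact ⟨1, by simp, by simp⟩
  | insert j s hj ih =>
    obtain ⟨ε, hε, hle⟩ := ih
    obtain ⟨c, hc, hc_inner⟩ : ∃ c : ℝ, |c| = 1 ∧ 0 ≤ c * ⟪z j, ∑ i ∈ s, ε i • z i⟫ := by
      rcases le_total 0 ⟪z j, ∑ i ∈ s, ε i • z i⟫ with h | h
      · exact ⟨1, by simp, by simpa using h⟩
      · exact ⟨-1, by simp, by simpa using h⟩
    have hupdate : ∑ i ∈ s, Function.update ε j c i • z i = ∑ i ∈ s, ε i • z i :=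
      Finset.sum_congr rfl fun i hi => by
        rw [Function.update_of_ne (ne_of_mem_of_not_mem hi hj)]
    refine ⟨Function.update ε j c, fun i => ?_, ?_⟩
    · rcases eq_or_ne i j with rfl | hij
      · rwa [Function.update_self]
      · rw [Function.update_of_ne hij, hε]
    · rw [Finset.sum_insert hj, Finset.sum_insert hj, hupdate, Function.update_self,
        norm_add_sq_real, real_inner_smul_left, norm_smul, Real.norm_eq_abs, hc, one_mul]
      linarith

variable {V ι : Type*} [NormedAddCommGroup V] [InnerProductSpace ℝ V] [Fintype ι]
  {K : ProperCone ℝ V}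

namespace IsSelfDual

section CompleteSpace

variable [CompleteSpace V]

lemma sum_norm_sq_le_of_mem_maxL1Cone (hK : IsSelfDual K) {q : V × (ι → V)}
    (hq : q ∈ maxL1Cone K ι) : ∑ i, ‖q.2 i‖ ^ 2 ≤ ‖q.1‖ ^ 2 := by
  obtain ⟨ε, hε, hle⟩ := exists_signs_sum_norm_sq_le q.2 Finset.univ
  have hadd := hq ε fun i => (hε i).le
  have hsub := hq (-ε) fun i => by simp [hε]
  simp only [Pi.neg_apply, neg_smul, Finset.sum_neg_distrib, ← sub_eq_add_neg] at hsub
  have hnorm := hK.norm_le_norm_of_add_mem_of_sub_mem hadd hsub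
  exact hle.trans (by gcongr)

lemma sum_norm_le_of_mem_maxL1Cone (hK : IsSelfDual K) {q : V × (ι → V)}
    (hq : q ∈ maxL1Cone K ι) : ∑ i, ‖q.2 i‖ ≤ √(Fintype.card ι) * ‖q.1‖ := by
  refine le_of_sq_le_sq ?_ (by positivity)
  calc (∑ i, ‖q.2 i‖) ^ 2 ≤ Fintype.card ι * ∑ i, ‖q.2 i‖ ^ 2 := sq_sum_le_card_mul_sum_sq
    _ ≤ Fintype.card ι * ‖q.1‖ ^ 2 := by
        gcongr
        exact hK.sum_norm_sq_le_of_mem_maxL1Cone hq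
    _ = (√(Fintype.card ι) * ‖q.1‖) ^ 2 := by rw [mul_pow, Real.sq_sqrt (Nat.cast_nonneg _)]

lemma inner_add_sum_inner_nonneg_of_fst_eq (hK : IsSelfDual K) {q p : V × (ι → V)}
    (hq : q ∈ maxL1Cone K ι) (hp : p ∈ maxLinftyCone K ι) (hqp : q.1 = p.1) :
    0 ≤ √(Fintype.card ι) * ⟪q.1, p.1⟫ + ∑ i, ⟪q.2 i, p.2 i⟫ := by
  have hp_norm (i : ι) : ‖p.2 i‖ ≤ ‖p.1‖ :=
    hK.norm_le_norm_of_add_mem_of_sub_mem (hp i).1 (hp i).2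
  have hsum : -∑ i, ⟪q.2 i, p.2 i⟫ ≤ √(Fintype.card ι) * ⟪q.1, p.1⟫ :=
    calc -∑ i, ⟪q.2 i, p.2 i⟫ ≤ ∑ i, ‖q.2 i‖ * ‖p.2 i‖ := by
          rw [← Finset.sum_neg_distrib]
          gcongr with i
          exact neg_le_of_neg_le (neg_le_of_abs_le (abs_real_inner_le_norm _ _))
      _ ≤ (∑ i, ‖q.2 i‖) * ‖p.1‖ := by
          rw [Finset.sum_mul]
          gcongr with i
          exact hp_norm i
      _ ≤ √(Fintype.card ι) * ‖q.1‖ * ‖p.1‖ := by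
          gcongr
          exact hK.sum_norm_le_of_mem_maxL1Cone hq
      _ = √(Fintype.card ι) * ⟪q.1, p.1⟫ := by
          rw [hqp, real_inner_self_eq_norm_mul_norm, mul_assoc]
  linarith

end CompleteSpace

variable [FiniteDimensional ℝ V]

lemma inner_add_sum_inner_nonneg_of_mem_interior (hK : IsSelfDual K) (hhom : IsHomogeneousCone K)
    {q p : V × (ι → V)} (hq : q ∈ maxL1Cone K ι) (hp : p ∈ maxLinftyCone K ι)
    (hq_int : q.1 ∈ interior (K : Set V)) (hp_int : p.1 ∈ interior (K : Set V)) :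
    0 ≤ √(Fintype.card ι) * ⟪q.1, p.1⟫ + ∑ i, ⟪q.2 i, p.2 i⟫ := by
  obtain ⟨A, hA, hAqp⟩ := hhom.exists_smul_eq_adjoint_inv_apply hK hq_int hp_int
  have hinner (a b : V) : ⟪(A : V →L[ℝ] V) a, adjoint (↑A⁻¹ : V →L[ℝ] V) b⟫ = ⟪a, b⟫ := by
    rw [ContinuousLinearMap.adjoint_inner_right, ← mul_apply_eq_comp, Units.inv_mul,
      one_apply_eq_self]
  have h := hK.inner_add_sum_inner_nonneg_of_fst_eq
    (map_mem_maxL1Cone (mapsTo_of_mem_coneAut hA) hq)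
    (map_mem_maxLinftyCone (hK.adjoint_mapsTo (mapsTo_of_mem_coneAut (inv_mem hA))) hp) hAqp
  simpa only [hinner] using h

lemma inner_add_sum_inner_nonneg [Nonempty ι] (hK : IsSelfDual K) (hhom : IsHomogeneousCone K)
    {q p : V × (ι → V)} (hq : q ∈ maxL1Cone K ι) (hp : p ∈ maxLinftyCone K ι) :
    0 ≤ √(Fintype.card ι) * ⟪q.1, p.1⟫ + ∑ i, ⟪q.2 i, p.2 i⟫ := by
  obtain ⟨u, hu⟩ := hK.interior_nonempty
  let F : ℝ → ℝ := fun t => √(Fintype.card ι) * ⟪q.1 + t • u, p.1 + t • u⟫ + ∑ i, ⟪q.2 i, p.2 i⟫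
  have hF : Continuous F := by fun_prop
  have hF_pos (t : ℝ) (ht : t ∈ Ioi 0) : 0 ≤ F t := by
    have htu : t • u ∈ interior (K : Set V) := smul_mem_interior_cone hu ht
    have hint {a : V} (ha : a ∈ K) : a + t • u ∈ interior (K : Set V) :=
      add_comm a _ ▸ add_mem_interior_cone htu ha
    exact hK.inner_add_sum_inner_nonneg_of_mem_interior hhom
      (add_fst_mem_maxL1Cone hq (interior_subset htu))
      (add_fst_mem_maxLinftyCone hp (interior_subset htu))
      (hint (fst_mem_of_mem_maxL1Cone hq)) (hint (fst_mem_of_mem_maxLinftyCone hp))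
  have hF_zero : 0 ≤ F 0 := ge_of_tendsto (hF.continuousWithinAt (s := Ioi 0))
    (eventually_mem_nhdsWithin.mono hF_pos)
  simpa [F] using hF_zero

end IsSelfDual

end Pairing

section Decomposition

lemma isClosed_image_of_norm_le {E F : Type*} [SeminormedAddCommGroup E] [ProperSpace E]
    [NormedAddCommGroup F] {s : Set E} (hs : IsClosed s) {f : E → F} (hf : Continuous f)
    {c : ℝ} (hc : 0 ≤ c) (hbound : ∀ x ∈ s, ‖x‖ ≤ c * ‖f x‖) : IsClosed (f '' s) := by
  refine isClosed_of_closure_subset fun y hy => ?_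
  let B := Metric.closedBall (0 : E) (c * (‖y‖ + 1))
  have hB : IsClosed (f '' (s ∩ B)) :=
    (((isCompact_closedBall 0 _).inter_left hs).image hf).isClosed
  have hlocal : Metric.ball y 1 ∩ f '' s ⊆ f '' (s ∩ B) := by
    rintro _ ⟨hxy, x, hx, rfl⟩
    refine mem_image_of_mem f ⟨hx, mem_closedBall_zero_iff.2 ((hbound x hx).trans ?_)⟩
    gcongr
    rw [Metric.mem_ball, dist_eq_norm] at hxy
    linarith [norm_le_norm_add_norm_sub' (f x) y]
  have hyB : y ∈ f '' (s ∩ B) := hB.closure_subset_iff.2 hlocal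
    (Metric.isOpen_ball.inter_closure ⟨Metric.mem_ball_self one_pos, hy⟩)
  exact image_mono inter_subset_left hyB

variable {V ι : Type*} [NormedAddCommGroup V] [InnerProductSpace ℝ V] [Fintype ι]

lemma exists_forall_apply_eq_inner_add_sum_inner [CompleteSpace V]
    (f : StrongDual ℝ (V × (ι → V))) :
    ∃ p : V × (ι → V), ∀ q, f q = ⟪q.1, p.1⟫ + ∑ i, ⟪q.2 i, p.2 i⟫ := by
  classical
  let w₀ := (InnerProductSpace.toDual ℝ V).symm (f ∘L ContinuousLinearMap.inl ℝ V (ι → V))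
  let w (i : ι) := (InnerProductSpace.toDual ℝ V).symm
    (f ∘L ContinuousLinearMap.inr ℝ V (ι → V) ∘L ContinuousLinearMap.single ℝ (fun _ => V) i)
  refine ⟨(w₀, w), fun q => ?_⟩
  have hsplit : q = (q.1, 0) + ∑ i, ((0 : V), (Pi.single i (q.2 i) : ι → V)) := by
    ext j <;> simp [Prod.fst_sum, Prod.snd_sum, Finset.sum_apply]
  have hw₀ : ⟪q.1, w₀⟫ = f (q.1, 0) := by
    rw [real_inner_comm]
    simp [w₀]
  have hw (i : ι) : ⟪q.2 i, w i⟫ = f (0, Pi.single i (q.2 i)) := by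
    rw [real_inner_comm]
    simp [w]
  simp only [hw₀, hw]
  rw [← map_sum, ← map_add, ← hsplit]

variable {K : ProperCone ℝ V}

lemma IsSelfDual.isClosed_minL1Cone [FiniteDimensional ℝ V] (hK : IsSelfDual K) :
    IsClosed (minL1Cone K ι : Set (V × (ι → V))) := by
  rw [minL1Cone, PointedCone.coe_map]
  refine isClosed_image_of_norm_le ?_ (minL1Map V ι).continuous zero_le_one ?_
  · simpa only [Submodule.prod_coe, Submodule.coe_pi] using!
      (isClosed_set_pi fun _ _ => K.isClosed).prod (isClosed_set_pi fun _ _ => K.isClosed)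
  rintro ⟨a, b⟩ hab
  obtain ⟨ha, hb⟩ : (∀ i, a i ∈ K) ∧ ∀ i, b i ∈ K := by simpa using hab
  rw [one_mul]
  have hsub (i : ι) : ∑ j, (a j + b j) - (a i + b i) ∈ K := by
    classical
    rw [← Finset.sum_erase_eq_sub (Finset.mem_univ i)]
    exact sum_mem fun j _ => K.add_mem (ha j) (hb j)
  have hfst : ‖∑ j, (a j + b j)‖ ≤ ‖minL1Map V ι (a, b)‖ := by
    simpa only [minL1Map_apply] using norm_fst_le (minL1Map V ι (a, b))
  refine (norm_prod_le_iff.2 ⟨?_, ?_⟩).trans hfst <;>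
    refine (pi_norm_le_iff_of_nonneg (norm_nonneg _)).2 fun i => ?_
  · refine hK.norm_le_norm_of_sub_mem (ha i) ?_
    have h := K.add_mem (hsub i) (hb i)
    rwa [sub_add_eq_sub_sub, sub_add_cancel] at h
  · refine hK.norm_le_norm_of_sub_mem (hb i) ?_
    have h := K.add_mem (hsub i) (ha i)
    rwa [sub_add_eq_sub_sub_swap, sub_add_cancel] at h

lemma IsSelfDual.mem_maxLinftyCone_of_forall_mem_minL1Cone [CompleteSpace V] (hK : IsSelfDual K)
    {p : V × (ι → V)} (hp : ∀ q ∈ minL1Cone K ι, 0 ≤ ⟪q.1, p.1⟫ + ∑ i, ⟪q.2 i, p.2 i⟫) :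
    p ∈ maxLinftyCone K ι := by
  classical
  intro i
  have hsingle {x : V} (hx : x ∈ K) (j : ι) : (Pi.single i x : ι → V) j ∈ K := by
    rcases eq_or_ne j i with rfl | hj
    · simpa using hx
    · simp [hj]
  have hinner (x : V) : ∑ j, ⟪(Pi.single i x : ι → V) j, p.2 j⟫ = ⟪x, p.2 i⟫ := by
    rw [Fintype.sum_eq_single i fun j hj => by rw [Pi.single_eq_of_ne hj, inner_zero_left],
      Pi.single_eq_same]
  constructor <;> refine hK.mem_iff.2 fun x hx => ?_
  · have h := hp (x, Pi.single i x)
      (mem_minL1Cone.2 ⟨Pi.single i x, 0, hsingle hx, fun _ => K.zero_mem, by simp⟩)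
    rwa [hinner, ← inner_add_right] at h
  · have h := hp (x, -Pi.single i x)
      (mem_minL1Cone.2 ⟨0, Pi.single i x, fun _ => K.zero_mem, hsingle hx, by simp⟩)
    simp only [Pi.neg_apply, inner_neg_left, Finset.sum_neg_distrib, hinner] at h
    rwa [← sub_eq_add_neg, ← inner_sub_right] at h

theorem IsSelfDual.smul_fst_mem_minL1Cone [FiniteDimensional ℝ V] [Nonempty ι]
    (hK : IsSelfDual K) (hhom : IsHomogeneousCone K) {q : V × (ι → V)}
    (hq : q ∈ maxL1Cone K ι) : (√(Fintype.card ι) • q.1, q.2) ∈ minL1Cone K ι := by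
  let P : ProperCone ℝ (V × (ι → V)) := ⟨minL1Cone K ι, hK.isClosed_minL1Cone⟩
  change _ ∈ P
  by_contra hqP
  obtain ⟨f, hfP, hfq⟩ := P.hyperplane_separation_point hqP
  obtain ⟨p, hp⟩ := exists_forall_apply_eq_inner_add_sum_inner f
  have hp_mem : p ∈ maxLinftyCone K ι :=
    hK.mem_maxLinftyCone_of_forall_mem_minL1Cone fun s hs => hp s ▸ hfP s hs
  rw [hp, real_inner_smul_left] at hfq
  exact hfq.not_ge (hK.inner_add_sum_inner_nonneg hhom hq hp_mem)

end Decomposition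

section TensorProduct

variable {V W ι : Type*} [AddCommGroup V] [Module ℝ V] [AddCommGroup W] [Module ℝ W]

lemma sum_tmul_mem_minTensor {C : Set V} {D : Set W}
    (hC : ∀ ⦃c : ℝ⦄, 0 < c → ∀ ⦃x⦄, x ∈ C → c • x ∈ C) {s : Finset ι} (hs : s.Nonempty)
    {x : ι → V} {y : ι → W} (hx : ∀ i ∈ s, x i ∈ C) (hy : ∀ i ∈ s, y i ∈ D) :
    ∑ i ∈ s, x i ⊗ₜ[ℝ] y i ∈ minTensor C D := by
  have hcard : (0 : ℝ) < s.card := by exact_mod_cast hs.card_pos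
  have hmem : ∑ i ∈ s, (s.card : ℝ)⁻¹ • (((s.card : ℝ) • x i) ⊗ₜ[ℝ] y i) ∈ minTensor C D :=
    (convex_convexHull ℝ _).sum_mem (fun _ _ => by positivity) (by simp [hcard.ne'])
      fun i hi => subset_convexHull ℝ _ ⟨_, hC hcard (hx i hi), _, hy i hi, rfl⟩
  simpa only [TensorProduct.smul_tmul', inv_smul_smul₀ hcard.ne'] using hmem

variable [Fintype ι] [DecidableEq ι]

/-- The tensor with coordinates `q`, in the sense of `maxLinftyCone`. -/
def tensorOfCoords (q : V × (ι → V)) : V ⊗[ℝ] (ℝ × (ι → ℝ)) :=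
  q.1 ⊗ₜ (1, 0) + ∑ i, q.2 i ⊗ₜ (0, Pi.single i 1)

lemma tensorOfCoords_surjective :
    Function.Surjective (tensorOfCoords : V × (ι → V) → V ⊗[ℝ] (ℝ × (ι → ℝ))) := by
  intro t
  induction t using TensorProduct.induction_on with
  | zero => exact ⟨0, by simp [tensorOfCoords]⟩
  | tmul v p =>
    refine ⟨(p.1 • v, fun i => p.2 i • v), ?_⟩
    simp only [tensorOfCoords, TensorProduct.smul_tmul]
    rw [← TensorProduct.tmul_sum, ← TensorProduct.tmul_add]
    congr 1
    ext j <;> simp [Prod.fst_sum, Prod.snd_sum, Finset.sum_apply, Pi.single_apply]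
  | add _ _ ht ht' =>
    obtain ⟨q, rfl⟩ := ht
    obtain ⟨q', rfl⟩ := ht'
    refine ⟨q + q', ?_⟩
    simp only [tensorOfCoords, Prod.fst_add, Prod.snd_add, Pi.add_apply, TensorProduct.add_tmul,
      Finset.sum_add_distrib]
    abel

lemma tensorOfCoords_sum_add_sub (a b : ι → V) :
    tensorOfCoords (∑ i, (a i + b i), a - b) =
      ∑ i, a i ⊗ₜ[ℝ] ((1 : ℝ), (Pi.single i 1 : ι → ℝ)) +
        ∑ i, b i ⊗ₜ[ℝ] ((1 : ℝ), -(Pi.single i 1 : ι → ℝ)) := by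
  have hsplit (i : ι) : ((1 : ℝ), (Pi.single i 1 : ι → ℝ)) = (1, 0) + (0, Pi.single i 1) ∧
      ((1 : ℝ), -(Pi.single i 1 : ι → ℝ)) = (1, 0) - (0, Pi.single i 1) := by simp
  simp only [tensorOfCoords, (hsplit _).1, (hsplit _).2, TensorProduct.tmul_add,
    TensorProduct.tmul_sub, TensorProduct.sum_tmul, TensorProduct.add_tmul, Pi.sub_apply,
    TensorProduct.sub_tmul, Finset.sum_add_distrib, Finset.sum_sub_distrib]
  abel

lemma map_isoSqrt_tensorOfCoords {k : ℕ} (q : V × (Fin k → V)) :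
    TensorProduct.map LinearMap.id (isoSqrt k) (tensorOfCoords q) =
      tensorOfCoords (√k • q.1, q.2) := by
  have hfst : isoSqrt k (1, 0) = √k • (1, 0) := by simp [isoSqrt]
  have hsnd (i : Fin k) : isoSqrt k (0, Pi.single i 1) = (0, Pi.single i 1) := by simp [isoSqrt]
  simp only [tensorOfCoords, map_add, map_sum, TensorProduct.map_tmul, LinearMap.id_apply, hfst,
    hsnd, TensorProduct.smul_tmul]

lemma fst_add_sum_mul_mem_dualConeSet_l1Cone {k : ℕ} {ε : Fin k → ℝ} (hε : ∀ i, |ε i| ≤ 1) :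
    LinearMap.fst ℝ ℝ (Fin k → ℝ) + (∑ i, ε i • LinearMap.proj i) ∘ₗ LinearMap.snd ℝ ℝ (Fin k → ℝ) ∈
      dualConeSet (l1Cone k) := fun p (hp : ∑ i, |p.2 i| ≤ p.1) => by
  have hsum : -∑ i, ε i * p.2 i ≤ p.1 :=
    calc -∑ i, ε i * p.2 i ≤ ∑ i, |p.2 i| := by
          rw [← Finset.sum_neg_distrib]
          gcongr with i
          exact (neg_le_abs _).trans
            ((abs_mul _ _).trans_le (mul_le_of_le_one_left (abs_nonneg _) (hε i)))
      _ ≤ p.1 := hp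
  simpa [LinearMap.sum_apply] using neg_le_iff_add_nonneg.1 hsum

end TensorProduct

section InnerProductSpace

variable {V : Type*} [NormedAddCommGroup V] [InnerProductSpace ℝ V] {K : ProperCone ℝ V} {k : ℕ}

lemma IsSelfDual.mem_maxL1Cone_of_tensorOfCoords_mem [CompleteSpace V] (hK : IsSelfDual K)
    {q : V × (Fin k → V)} (hq : tensorOfCoords q ∈ maxTensor (K : Set V) (l1Cone k)) :
    q ∈ maxL1Cone K (Fin k) := fun ε hε => hK.mem_iff.2 fun x hx => by
  have hx_dual : (innerₛₗ ℝ x : Module.Dual ℝ V) ∈ dualConeSet (K : Set V) :=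
    fun y hy => hK.inner_nonneg hx hy
  have h := hq _ hx_dual _ (fst_add_sum_mul_mem_dualConeSet_l1Cone hε)
  simpa [tensorOfCoords, LinearMap.sum_apply, inner_add_right, inner_sum, real_inner_smul_right,
    Pi.single_apply, mul_comm] using h

lemma tensorOfCoords_mem_minTensor [NeZero k] {q : V × (Fin k → V)}
    (hq : q ∈ minL1Cone K (Fin k)) : tensorOfCoords q ∈ minTensor (K : Set V) (l1Cone k) := by
  obtain ⟨a, b, ha, hb, rfl⟩ := mem_minL1Cone.1 hq
  have h := sum_tmul_mem_minTensor (C := (K : Set V)) (D := l1Cone k)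
    (fun c hc x hx => K.smul_mem hx hc.le) Finset.univ_nonempty (x := Sum.elim a b)
    (y := Sum.elim (fun i => (1, Pi.single i 1)) (fun i => (1, -Pi.single i 1)))
    (by simpa using ⟨ha, hb⟩) (by simp [l1Cone, Pi.single_apply, apply_ite abs])
  simpa only [tensorOfCoords_sum_add_sub, Fintype.sum_sum_type, Sum.elim_inl, Sum.elim_inr] using h

open scoped Pointwise in
lemma IsSymmetricCone.exists_properCone [FiniteDimensional ℝ V] {C : Set V}
    (hC : IsSymmetricCone C) :
    ∃ K : ProperCone ℝ V, (K : Set V) = C ∧ IsSelfDual K ∧ IsHomogeneousCone K := by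
  obtain ⟨-, hdual, htrans⟩ := hC
  have hcoe : (ProperCone.innerDual C : Set V) = C := hdual.symm
  refine ⟨ProperCone.innerDual C, hcoe, congrArg ProperCone.innerDual hcoe, ?_⟩
  rw [IsHomogeneousCone, hcoe]
  intro x hx y hy
  obtain ⟨A, hA, hAxy⟩ := htrans x hx y hy
  refine ⟨A.toContinuousLinearEquiv.toUnit, MulAction.mem_stabilizer_iff.2 ?_, hAxy⟩
  rw [hcoe]
  exact hA

end InnerProductSpace

/-- **Theorem.** For every symmetric cone `C` and every `k ≥ 1`,
`(id ⊗ I_{√k})(C ⊗max C_{ℓ₁ᵏ}) ⊆ C ⊗min C_{ℓ₁ᵏ}`. -/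
theorem symmetricCone_breaks_l1_entanglement
    (V : Type) [NormedAddCommGroup V] [InnerProductSpace ℝ V] [FiniteDimensional ℝ V]
    (C : Set V) (hC : IsSymmetricCone C) (k : ℕ) (hk : 1 ≤ k) :
    Set.MapsTo (⇑(TensorProduct.map (LinearMap.id : V →ₗ[ℝ] V) (isoSqrt k)))
      (maxTensor C (l1Cone k)) (minTensor C (l1Cone k)) := by
  intro t ht
  have : NeZero k := NeZero.of_pos hk
  obtain ⟨K, rfl, hK, hhom⟩ := hC.exists_properCone
  obtain ⟨q, rfl⟩ := tensorOfCoords_surjective t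
  have hq : (√k • q.1, q.2) ∈ minL1Cone K (Fin k) := by
    simpa only [Fintype.card_fin] using
      hK.smul_fst_mem_minL1Cone hhom (hK.mem_maxL1Cone_of_tensorOfCoords_mem ht)
  rw [map_isoSqrt_tensorOfCoords]
  exact tensorOfCoords_mem_minTensor hq

end
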